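/- Let G be a concurrent game structure with boolean reward function and Y* = μY.νZ.ASP(S,Y,Z). There exists a Markov strategy σ₁* for player 1 such that for every state s∈Y* and every strategy σ₂ of player 2, Pr_s^{σ₁*,σ₂}(LimInfAvg(1)) > 0. -/

import Mathlib

/-!
Let `∅ = Y₀ ⊆ Y₁ ⊆ …` be the iteration stages of the least fixpoint `Y*`; they exhaust `Y*`
because the state space is finite. Fix for every state `s ∈ Yₙ₊₁ \ Yₙ` a good action `g s`
(`CGS.exists_selector`): if player 2 answers with an action that is not bad, the reward is `1`
and the play stays in `Yₙ₊₁`; if player 2 answers with a bad action, some available action of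
player 1 leads to `Yₙ` with positive probability. In round `n` the Markov strategy
(`CGS.mixStrategy`) plays `g s` with probability `goodProb n`, where the infinite product of the
`goodProb n` is positive, and a uniformly random available action otherwise.

Given a strategy of player 2, consider the least stage `Yₖ₊₁` that is reached with positive
probability, and a finite history of positive probability that reaches it. As long as player 1
follows `g` after this history, player 2 never plays a bad action with positive probability,
since otherwise `Yₖ` would be reached with positive probability. Hence on the event that
player 1 follows `g` forever, all later rewards are `1` and the limit average is `1`. This event
has positive probability by the choice of `goodProb` (`CGS.approx_follow_lower`).

The probability of an event is an outer measure built from arbitrary countable covers, so a lower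
bound on all finite prefixes is transferred to the limit event by compactness of the space of
plays (`CGS.le_pr`).
-/

open scoped Classical ENNReal
open Filter

/-- A concurrent stochastic game structure `G = (S, A, Γ₁, Γ₂, δ)` together with a
boolean reward function `r : S × A × A → {0,1}`. -/
structure CGS where
  /-- finite state space -/
  S : Type
  /-- finite action space -/
  A : Type
  [fintypeS : Fintype S]
  [fintypeA : Fintype A]
  [decS : DecidableEq S]
  [decA : DecidableEq A]
  [nonemptyS : Nonempty S]
  /-- moves available to player 1 -/
  moves1 : S → Finset A
  /-- moves available to player 2 -/
  moves2 : S → Finset A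
  moves1_nonempty : ∀ s, (moves1 s).Nonempty
  moves2_nonempty : ∀ s, (moves2 s).Nonempty
  /-- probabilistic transition function -/
  trans : S → A → A → PMF S
  /-- reward function -/
  reward : S → A → A → ℝ
  /-- the reward function is boolean -/
  reward_bool : ∀ s a b, reward s a b = 0 ∨ reward s a b = 1

attribute [instance] CGS.fintypeS CGS.fintypeA CGS.decS CGS.decA CGS.nonemptyS

namespace CGS

variable (G : CGS)

/-- One round: a state together with the actions chosen by the two players. -/
abbrev Move := G.S × G.A × G.A

/-- A finite history. -/
abbrev Hist := List G.Move

/-- A play (we allow arbitrary infinite sequences; invalid ones get probability 0). -/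
abbrev Play := ℕ → G.Move

/-- A (behavioral) strategy whose moves are restricted to `moves`. -/
structure Strategy (moves : G.S → Finset G.A) where
  play : G.Hist → G.S → PMF G.A
  play_mem : ∀ h s a, play h s a ≠ 0 → a ∈ moves s

/-- A strategy for player 1. -/
abbrev Strategy1 := G.Strategy G.moves1
/-- A strategy for player 2. -/
abbrev Strategy2 := G.Strategy G.moves2

variable {G}

/-- A stationary (memoryless) strategy. -/
def Strategy.Stationary {mv : G.S → Finset G.A} (σ : G.Strategy mv) : Prop :=
  ∀ h h' s, σ.play h s = σ.play h' s

/-- A Markov strategy: depends only on the length of the history and current state. -/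
def Strategy.Markov {mv : G.S → Finset G.A} (σ : G.Strategy mv) : Prop :=
  ∀ h h' s, h.length = h'.length → σ.play h s = σ.play h' s

/-- The patience of a strategy: the inverse of the minimum nonzero probability
assigned to an action. -/
noncomputable def Strategy.patience {mv : G.S → Finset G.A} (σ : G.Strategy mv) : ℝ≥0∞ :=
  ⨆ h, ⨆ s, ⨆ a, if σ.play h s a = 0 then 0 else (σ.play h s a)⁻¹

/-- Probability that the play follows exactly the finite prefix `w`, starting at
state `s` after past history `h`, when the players use `σ1` and `σ2`. -/
noncomputable def prefProb (σ1 : G.Strategy1) (σ2 : G.Strategy2) :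
    G.Hist → G.S → List G.Move → ℝ≥0∞
  | _, _, [] => 1
  | h, s, (t, a, b) :: w =>
      if t = s then
        σ1.play h s a * σ2.play h s b *
          (match w with
            | [] => 1
            | (t', _, _) :: _ =>
                G.trans s a b t' * prefProb σ1 σ2 (h ++ [(s, a, b)]) t' w)
      else 0

/-- The cylinder of plays extending a given finite prefix. -/
def cyl (n : ℕ) (w : Fin n → G.Move) : Set G.Play := {ρ | ∀ i : Fin n, ρ i.1 = w i}

/-- Pre-measure of a set of plays: the infimum, over resolutions `n`, of the total
probability of the length-`n` prefixes meeting the set. -/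
noncomputable def preMeas (σ1 : G.Strategy1) (σ2 : G.Strategy2) (s : G.S)
    (U : Set G.Play) : ℝ≥0∞ :=
  ⨅ n : ℕ, ∑ w : Fin n → G.Move,
    if (cyl n w ∩ U).Nonempty then prefProb σ1 σ2 [] s (List.ofFn w) else 0

lemma preMeas_empty (σ1 : G.Strategy1) (σ2 : G.Strategy2) (s : G.S) :
    preMeas σ1 σ2 s (∅ : Set G.Play) = 0 := by
  simp [preMeas]

/-- The probability distribution over plays from `s` under `σ1, σ2`, obtained by the
Carathéodory construction from cylinder probabilities (this agrees with the
Ionescu–Tulcea measure on all measurable sets). -/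
noncomputable def prOuter (σ1 : G.Strategy1) (σ2 : G.Strategy2) (s : G.S) :
    MeasureTheory.OuterMeasure G.Play :=
  MeasureTheory.OuterMeasure.ofFunction (preMeas σ1 σ2 s) (preMeas_empty σ1 σ2 s)

/-- `Pr_s^{σ1,σ2}(Φ)`. -/
noncomputable def pr (σ1 : G.Strategy1) (σ2 : G.Strategy2) (s : G.S)
    (Φ : Set G.Play) : ℝ≥0∞ :=
  prOuter σ1 σ2 s Φ

variable (G)

/-- Average reward over the first `n` rounds of a play. -/
noncomputable def avg (ρ : G.Play) (n : ℕ) : ℝ :=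
  (∑ i ∈ Finset.range n, G.reward (ρ i).1 (ρ i).2.1 (ρ i).2.2) / n

/-- `LimInfAvg` of a play. -/
noncomputable def limInfAvg (ρ : G.Play) : ℝ := Filter.atTop.liminf (G.avg ρ)

/-- `LimSupAvg` of a play. -/
noncomputable def limSupAvg (ρ : G.Play) : ℝ := Filter.atTop.limsup (G.avg ρ)

/-- The event `LimInfAvg(λ) = {ρ : LimInfAvg(ρ) ≥ λ}`. -/
def evLimInfAvgGe (lam : ℝ) : Set G.Play := {ρ | lam ≤ G.limInfAvg ρ}
/-- The event `LimSupAvg(λ) = {ρ : LimSupAvg(ρ) ≥ λ}`. -/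
def evLimSupAvgGe (lam : ℝ) : Set G.Play := {ρ | lam ≤ G.limSupAvg ρ}
/-- The event `{ρ : LimInfAvg(ρ) ≤ λ}`. -/
def evLimInfAvgLe (lam : ℝ) : Set G.Play := {ρ | G.limInfAvg ρ ≤ lam}
/-- The event `{ρ : LimSupAvg(ρ) ≤ λ}`. -/
def evLimSupAvgLe (lam : ℝ) : Set G.Play := {ρ | G.limSupAvg ρ ≤ lam}
/-- The event `{ρ : LimInfAvg(ρ) < λ}`. -/
def evLimInfAvgLt (lam : ℝ) : Set G.Play := {ρ | G.limInfAvg ρ < lam}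
/-- The event `{ρ : LimSupAvg(ρ) < λ}`. -/
def evLimSupAvgLt (lam : ℝ) : Set G.Play := {ρ | G.limSupAvg ρ < lam}

/-- The safety event: all states of the play lie in `F`. -/
def safe (F : Set G.S) : Set G.Play := {ρ | ∀ i, (ρ i).1 ∈ F}

/-- Almost-sure winning set for player 1. -/
def Almost1 (Φ : Set G.Play) : Set G.S :=
  {s | ∃ σ1 : G.Strategy1, ∀ σ2 : G.Strategy2, pr σ1 σ2 s Φ = 1}
/-- Positive winning set for player 1. -/
def Positive1 (Φ : Set G.Play) : Set G.S :=
  {s | ∃ σ1 : G.Strategy1, ∀ σ2 : G.Strategy2, 0 < pr σ1 σ2 s Φ}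
/-- Almost-sure winning set for player 2. -/
def Almost2 (Φ : Set G.Play) : Set G.S :=
  {s | ∃ σ2 : G.Strategy2, ∀ σ1 : G.Strategy1, pr σ1 σ2 s Φ = 1}
/-- Positive winning set for player 2. -/
def Positive2 (Φ : Set G.Play) : Set G.S :=
  {s | ∃ σ2 : G.Strategy2, ∀ σ1 : G.Strategy1, 0 < pr σ1 σ2 s Φ}

/-- `n`, the number of states. -/
def nS : ℕ := Fintype.card G.S

/-- `m`, the maximal number of actions available to a player at a state. -/
def mA : ℕ := Finset.univ.sup fun s => max (G.moves1 s).card (G.moves2 s).card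

/-- `δ_min`, the minimum nonzero transition probability. -/
noncomputable def deltaMin : ℝ :=
  sInf {x : ℝ | 0 < x ∧ ∃ s a b t, a ∈ G.moves1 s ∧ b ∈ G.moves2 s ∧
    ((G.trans s a b) t).toReal = x}

end CGS

namespace CGS

variable (G : CGS)

/-- `Allow₁(s,X)`: player-1 actions that keep the play inside `X`. -/
def allow1 (s : G.S) (X : Set G.S) : Set G.A :=
  {a | a ∈ G.moves1 s ∧ ∀ b ∈ G.moves2 s, (G.trans s a b).support ⊆ X}

/-- `Bad₂(s,X,Y)`. -/
def bad2 (s : G.S) (X Y : Set G.S) : Set G.A :=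
  {b | b ∈ G.moves2 s ∧ ∃ a ∈ G.allow1 s X, ((G.trans s a b).support ∩ Y).Nonempty}

/-- `Good₁(s,X,Y,Z)`. -/
def good1 (s : G.S) (X Y Z : Set G.S) : Set G.A :=
  {a | a ∈ G.allow1 s X ∧ ∀ b ∈ G.moves2 s, b ∉ G.bad2 s X Y →
      (G.trans s a b).support ⊆ Z ∧ G.reward s a b = 1}

/-- The predecessor operator `ASP(X,Y,Z)`. -/
def ASP (X Y Z : Set G.S) : Set G.S := {s | (G.good1 s X Y Z).Nonempty}

/-- Greatest fixpoint (ν) of a monotone operator on sets, via Knaster–Tarski. -/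
def gfpS {α : Type*} (f : Set α → Set α) : Set α := ⋃₀ {X | X ⊆ f X}

/-- Least fixpoint (μ) of a monotone operator on sets, via Knaster–Tarski. -/
def lfpS {α : Type*} (f : Set α → Set α) : Set α := ⋂₀ {X | f X ⊆ X}

/-- `X* = νX. μY. νZ. ASP(X,Y,Z)`. -/
def Xstar : Set G.S :=
  gfpS fun X => lfpS fun Y => gfpS fun Z => G.ASP X Y Z

/-- `Y* = μY. νZ. ASP(S,Y,Z)`. -/
def Ystar : Set G.S :=
  lfpS fun Y => gfpS fun Z => G.ASP Set.univ Y Z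

end CGS

namespace CGS

/-! ### Transition probabilities of the play -/

section Words

variable {G : CGS}

/-- Distribution of the state reached after the history `w`, for a play started in `s`. -/
noncomputable def nextState (s : G.S) (w : G.Hist) : PMF G.S :=
  match w.getLast? with
  | none => PMF.pure s
  | some m => G.trans m.1 m.2.1 m.2.2

/-- Conditional probability that the round following the history `w` is `m`. -/
noncomputable def roundProb (σ1 : G.Strategy1) (σ2 : G.Strategy2) (s : G.S) (w : G.Hist)
    (m : G.Move) : ℝ≥0∞ :=
  nextState s w m.1 * (σ1.play w m.1 m.2.1 * σ2.play w m.1 m.2.2)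

lemma nextState_nil (s : G.S) : nextState s ([] : G.Hist) = PMF.pure s := rfl

lemma nextState_append (s : G.S) (w : G.Hist) (m : G.Move) :
    nextState s (w ++ [m]) = G.trans m.1 m.2.1 m.2.2 := by
  simp [nextState]

lemma prefProb_append_aux (σ1 : G.Strategy1) (σ2 : G.Strategy2) (w : G.Hist) :
    ∀ (h : G.Hist) (s : G.S) (m : G.Move),
      prefProb σ1 σ2 h s (w ++ [m]) = prefProb σ1 σ2 h s w *
        (nextState s w m.1 *
          (σ1.play (h ++ w) m.1 m.2.1 * σ2.play (h ++ w) m.1 m.2.2)) := by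
  induction w with
  | nil =>
    rintro h s ⟨t, a, b⟩
    by_cases hts : t = s
    · subst hts; simp [prefProb, nextState]
    · simp [prefProb, nextState, hts]
  | cons m' w ih =>
    rintro h s ⟨t, a, b⟩
    obtain ⟨t', a', b'⟩ := m'
    rcases w with _ | ⟨⟨t'', a'', b''⟩, w⟩
    · by_cases hts : t' = s
      · subst hts; simp [prefProb, nextState]
      · simp [prefProb, hts]
    · have := ih (h ++ [(t', a', b')]) t'' (t, a, b)
      by_cases hts : t' = s
      · subst hts
        have hn : nextState t' ((t', a', b') :: (t'', a'', b'') :: w)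
            = nextState t'' ((t'', a'', b'') :: w) := by
          simp [nextState, List.getLast?_cons]
        rw [hn]
        have hc : ∀ v, prefProb σ1 σ2 h t' ((t', a', b') :: (t'', a'', b'') :: v) =
            σ1.play h t' a' * σ2.play h t' b' * (G.trans t' a' b' t'' *
              prefProb σ1 σ2 (h ++ [(t', a', b')]) t'' ((t'', a'', b'') :: v)) := fun v => by
          rw [prefProb]; simp
        rw [List.cons_append, List.cons_append, hc, hc, ← List.cons_append, this]
        simp only [List.append_assoc, List.singleton_append]
        ring
      · simp [prefProb, hts]

lemma prefProb_append (σ1 : G.Strategy1) (σ2 : G.Strategy2) (s : G.S) (w : G.Hist)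
    (m : G.Move) :
    prefProb σ1 σ2 [] s (w ++ [m]) = prefProb σ1 σ2 [] s w * roundProb σ1 σ2 s w m := by
  simpa [roundProb] using prefProb_append_aux σ1 σ2 w [] s m

lemma PMF_sum_eq_one {α : Type*} [Fintype α] (p : PMF α) : ∑ a, p a = 1 := by
  rw [← tsum_fintype (L := .unconditional _)]; exact p.tsum_coe

lemma sum_roundProb (σ1 : G.Strategy1) (σ2 : G.Strategy2) (s : G.S) (w : G.Hist) :
    ∑ m, roundProb σ1 σ2 s w m = 1 := by
  simp only [roundProb, Fintype.sum_prod_type, ← Finset.mul_sum, PMF_sum_eq_one, mul_one]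

/-- If player 1 plays `g t` with probability at least `p` in every state `t`, then the next
round follows `g` with probability at least `p`. -/
lemma le_sum_roundProb (σ1 : G.Strategy1) (σ2 : G.Strategy2) (s : G.S) (w : G.Hist)
    (g : G.S → G.A) (p : ℝ≥0∞) (hp : ∀ t, p ≤ σ1.play w t (g t)) :
    p ≤ ∑ m : G.Move, if m.2.1 = g m.1 then roundProb σ1 σ2 s w m else 0 := by
  have : ∀ t, (∑ a, ∑ b, if a = g t then roundProb σ1 σ2 s w (t, a, b) else 0)
      = nextState s w t * σ1.play w t (g t) := by
    intro t
    rw [Finset.sum_eq_single (g t)]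
    · simp [roundProb, ← Finset.mul_sum, PMF_sum_eq_one]
    · intro a _ ha; simp [ha]
    · simp
  simp only [Fintype.sum_prod_type, this]
  calc p = ∑ t, nextState s w t * p := by
        rw [← Finset.sum_mul, PMF_sum_eq_one, one_mul]
    _ ≤ _ := Finset.sum_le_sum fun t _ => by gcongr; exact hp t

/-- The first `n` rounds of a play. -/
def pre (ρ : G.Play) (n : ℕ) : G.Hist := List.ofFn fun i : Fin n => ρ i

lemma pre_succ (ρ : G.Play) (n : ℕ) : pre ρ (n + 1) = pre ρ n ++ [ρ n] := by
  rw [pre, List.ofFn_succ_last]; rfl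

lemma pre_length (ρ : G.Play) (n : ℕ) : (pre ρ n).length = n := by simp [pre]

lemma exists_pre_eq [Inhabited G.Move] (w : G.Hist) : ∃ ρ : G.Play, pre ρ w.length = w :=
  ⟨fun i => w.getD i default, by
    apply List.ext_getElem
    · simp [pre]
    · intro i h1 h2; simp [pre]⟩

lemma pre_congr {ρ ρ' : G.Play} {n : ℕ} (h : ∀ i < n, ρ i = ρ' i) : pre ρ n = pre ρ' n := by
  unfold pre; congr 1; funext i; exact h i i.2

lemma sum_word_succ {M : Type*} [AddCommMonoid M] (n : ℕ) (f : (Fin (n + 1) → G.Move) → M) :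
    ∑ w, f w = ∑ w : Fin n → G.Move, ∑ m, f (Fin.snoc (α := fun _ => G.Move) w m) := by
  rw [← (Fin.snocEquiv (fun _ : Fin (n + 1) => G.Move)).sum_comp, Fintype.sum_prod_type,
    Finset.sum_comm]
  rfl

lemma prefProb_snoc (σ1 : G.Strategy1) (σ2 : G.Strategy2) (s : G.S) {n : ℕ}
    (w : Fin n → G.Move) (m : G.Move) :
    prefProb σ1 σ2 [] s (List.ofFn (Fin.snoc (α := fun _ => G.Move) w m)) =
      prefProb σ1 σ2 [] s (List.ofFn w) * roundProb σ1 σ2 s (List.ofFn w) m := by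
  rw [List.ofFn_succ_last, prefProb_append]
  simp

end Words

/-! ### Lower bounds for the outer measure -/

section Outer

variable {G : CGS}

/-- Total probability of the length-`n` prefixes that meet `U`. -/
noncomputable def approx (σ1 : G.Strategy1) (σ2 : G.Strategy2) (s : G.S) (n : ℕ)
    (U : Set G.Play) : ℝ≥0∞ :=
  ∑ w : Fin n → G.Move,
    if (cyl n w ∩ U).Nonempty then prefProb σ1 σ2 [] s (List.ofFn w) else 0

/-- The union of the length-`n` cylinders that meet `U`. -/
def saturate (n : ℕ) (U : Set G.Play) : Set G.Play :=
  {ρ | ∃ ρ' ∈ U, ∀ i < n, ρ' i = ρ i}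

variable (σ1 : G.Strategy1) (σ2 : G.Strategy2) (s : G.S)

lemma approx_mono (n : ℕ) {U V : Set G.Play} (h : U ⊆ V) :
    approx σ1 σ2 s n U ≤ approx σ1 σ2 s n V := by
  refine Finset.sum_le_sum fun w _ => ?_
  by_cases hU : (cyl n w ∩ U).Nonempty
  · rw [if_pos hU, if_pos (hU.mono (Set.inter_subset_inter_right _ h))]
  · rw [if_neg hU]; exact zero_le

lemma approx_succ_le (n : ℕ) (U : Set G.Play) :
    approx σ1 σ2 s (n + 1) U ≤ approx σ1 σ2 s n U := by
  unfold approx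
  rw [sum_word_succ]
  refine Finset.sum_le_sum fun w _ => ?_
  by_cases hU : (cyl n w ∩ U).Nonempty
  · rw [if_pos hU]
    calc _ ≤ ∑ m, prefProb σ1 σ2 [] s (List.ofFn w) * roundProb σ1 σ2 s (List.ofFn w) m := by
          refine Finset.sum_le_sum fun m _ => ?_
          split_ifs
          · rw [prefProb_snoc]
          · exact zero_le
      _ = _ := by rw [← Finset.mul_sum, sum_roundProb, mul_one]
  · rw [if_neg hU]
    refine le_of_eq (Finset.sum_eq_zero fun m _ => if_neg ?_)
    rintro ⟨ρ, h1, h2⟩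
    refine hU ⟨ρ, fun i => ?_, h2⟩
    simpa using h1 i.castSucc

lemma approx_anti (U : Set G.Play) : Antitone fun n => approx σ1 σ2 s n U :=
  antitone_nat_of_succ_le fun n => approx_succ_le σ1 σ2 s n U

lemma approx_saturate (n : ℕ) (U : Set G.Play) :
    approx σ1 σ2 s n (saturate n U) = approx σ1 σ2 s n U := by
  unfold approx
  refine Finset.sum_congr rfl fun w _ => ?_
  congr 1
  apply propext
  constructor
  · rintro ⟨ρ, h1, ρ', h2, h3⟩
    exact ⟨ρ', fun i => (h3 i i.2).trans (h1 i), h2⟩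
  · rintro ⟨ρ, h1, h2⟩
    exact ⟨ρ, h1, ρ, h2, fun _ _ => rfl⟩

lemma approx_biUnion_le (n : ℕ) (V : ℕ → Set G.Play) (F : Finset ℕ) :
    approx σ1 σ2 s n (⋃ i ∈ F, V i) ≤ ∑ i ∈ F, approx σ1 σ2 s n (V i) := by
  unfold approx
  rw [Finset.sum_comm]
  refine Finset.sum_le_sum fun w _ => ?_
  by_cases hU : (cyl n w ∩ ⋃ i ∈ F, V i).Nonempty
  · rw [if_pos hU]
    obtain ⟨ρ, h1, h2⟩ := hU
    simp only [Set.mem_iUnion] at h2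
    obtain ⟨i, hi, h2⟩ := h2
    refine le_trans ?_ (Finset.single_le_sum (fun _ _ => zero_le) hi)
    rw [if_pos ⟨ρ, h1, h2⟩]
  · rw [if_neg hU]; exact zero_le

/-- A set of plays that depends only on the first `n` rounds is clopen in the product of
discrete topologies. -/
lemma isClosed_of_determined [TopologicalSpace G.Move] [DiscreteTopology G.Move] (n : ℕ)
    (U : Set G.Play) (h : ∀ ρ ρ' : G.Play, (∀ i < n, ρ i = ρ' i) → ρ ∈ U → ρ' ∈ U) :
    IsClosed U := by
  have : U = (fun (ρ : G.Play) (i : Fin n) => ρ i) ⁻¹'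
      ((fun (ρ : G.Play) (i : Fin n) => ρ i) '' U) := by
    ext ρ
    constructor
    · exact fun hρ => ⟨ρ, hρ, rfl⟩
    · rintro ⟨ρ', h1, h2⟩
      exact h ρ' ρ (fun i hi => congrFun h2 ⟨i, hi⟩) h1
  rw [this]
  exact (isClosed_discrete _).preimage (by fun_prop)

/-- Compactness of the space of plays turns uniform lower bounds on finite prefixes into a
lower bound on the probability of a decreasing intersection of clopen sets, hence of every
event containing it. -/
lemma le_pr (Φ : Set G.Play) (C : ℕ → Set G.Play) (hC : Antitone C)
    (hdet : ∀ n (ρ ρ' : G.Play), (∀ i < n, ρ i = ρ' i) → ρ ∈ C n → ρ' ∈ C n)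
    (hΦ : ⋂ n, C n ⊆ Φ) (c : ℝ≥0∞) (n0 : ℕ)
    (hc : ∀ n, n0 ≤ n → c ≤ approx σ1 σ2 s n (C n)) : c ≤ pr σ1 σ2 s Φ := by
  unfold pr prOuter
  rw [MeasureTheory.OuterMeasure.ofFunction_apply]
  refine le_iInf fun U => le_iInf fun hU => ?_
  refine ENNReal.le_of_forall_pos_le_add fun ε hε hfin => ?_
  obtain ⟨δ, hδ0, hδ⟩ := ENNReal.exists_pos_sum_of_countable
    (ENNReal.coe_ne_zero.2 hε.ne') ℕ
  have hlt : ∀ i, ∃ n, approx σ1 σ2 s n (U i) < preMeas σ1 σ2 s (U i) + δ i := by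
    intro i
    have h1 : preMeas σ1 σ2 s (U i) < preMeas σ1 σ2 s (U i) + δ i :=
      ENNReal.lt_add_right ((ENNReal.le_tsum i).trans_lt hfin).ne
        (ENNReal.coe_ne_zero.2 (hδ0 i).ne')
    exact iInf_lt_iff.1 h1
  choose k hk using hlt
  let V : ℕ → Set G.Play := fun i => saturate (k i) (U i)
  -- some finite stage of `C` is already covered by finitely many of the clopen sets `V i`
  obtain ⟨N, hN⟩ : ∃ N, C N ⊆ ⋃ i ∈ Finset.range N, V i := by
    by_contra hcon
    push Not at hcon
    let : TopologicalSpace G.Move := ⊥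
    have : DiscreteTopology G.Move := ⟨rfl⟩
    have hVc : ∀ i, IsClosed (V i)ᶜ := fun i => by
      refine isClosed_of_determined (k i) _ fun ρ ρ' h h1 h2 => h1 ?_
      obtain ⟨ρ'', h3, h4⟩ := h2
      exact ⟨ρ'', h3, fun j hj => (h4 j hj).trans (h j hj).symm⟩
    have hKc : ∀ N, IsClosed (C N \ ⋃ i ∈ Finset.range N, V i) := fun N => by
      rw [Set.sdiff_eq, Set.compl_iUnion₂]
      exact (isClosed_of_determined N _ (hdet N)).inter
        (isClosed_biInter fun i _ => hVc i)
    obtain ⟨ρ, hρ⟩ := IsCompact.nonempty_iInter_of_sequence_nonempty_isCompact_isClosed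
      (fun N => C N \ ⋃ i ∈ Finset.range N, V i)
      (fun N => Set.sdiff_subset_sdiff (hC (Nat.le_succ N))
        (Set.biUnion_subset_biUnion_left fun i hi => by
          simp only [Finset.coe_range, Set.mem_Iio] at hi ⊢
          exact Nat.lt_succ_of_lt hi))
      (fun N => Set.sdiff_nonempty.2 (hcon N)) (hKc 0).isCompact hKc
    rw [Set.mem_iInter] at hρ
    obtain ⟨i, hi⟩ := Set.mem_iUnion.1 (hU (hΦ (Set.mem_iInter.2 fun n => (hρ n).1)))
    refine (hρ (i + 1)).2 (Set.mem_iUnion₂.2 ⟨i, by simp, ρ, hi, fun _ _ => rfl⟩)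
  obtain ⟨M, hM0, hMN, hMk⟩ : ∃ M, n0 ≤ M ∧ N ≤ M ∧ ∀ i ∈ Finset.range N, k i ≤ M :=
    ⟨max n0 (max N ((Finset.range N).sup k)), by simp, by simp, fun i hi =>
      (Finset.le_sup (f := k) hi).trans (by simp)⟩
  calc c ≤ approx σ1 σ2 s M (C M) := hc M hM0
    _ ≤ approx σ1 σ2 s M (⋃ i ∈ Finset.range N, V i) :=
        approx_mono _ _ _ _ ((hC hMN).trans hN)
    _ ≤ ∑ i ∈ Finset.range N, approx σ1 σ2 s M (V i) := approx_biUnion_le _ _ _ _ _ _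
    _ ≤ ∑ i ∈ Finset.range N, (preMeas σ1 σ2 s (U i) + δ i) := by
        refine Finset.sum_le_sum fun i hi => ?_
        calc _ ≤ approx σ1 σ2 s (k i) (V i) := approx_anti σ1 σ2 s (V i) (hMk i hi)
          _ = approx σ1 σ2 s (k i) (U i) := approx_saturate _ _ _ _ _
          _ ≤ _ := (hk i).le
    _ ≤ ∑' i, (preMeas σ1 σ2 s (U i) + δ i) := ENNReal.sum_le_tsum _
    _ = ∑' i, preMeas σ1 σ2 s (U i) + ∑' i, (δ i : ℝ≥0∞) := ENNReal.tsum_add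
    _ ≤ _ := by gcongr

end Outer

end CGS

namespace CGS

/-! ### The iteration stages of `Y*` -/

section Stages

variable (G : CGS)

lemma gfpS_mono {α : Type*} {f f' : Set α → Set α} (h : ∀ X, f X ⊆ f' X) :
    gfpS f ⊆ gfpS f' :=
  Set.sUnion_subset_sUnion fun X (hX : X ⊆ f X) => hX.trans (h X)

lemma gfpS_subset {α : Type*} {f : Set α → Set α} (hf : Monotone f) :
    gfpS f ⊆ f (gfpS f) :=
  Set.sUnion_subset fun X (hX : X ⊆ f X) => hX.trans (hf (Set.subset_sUnion_of_mem hX))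

lemma ASP_mono (X : Set G.S) {Y Y' Z Z' : Set G.S} (hY : Y ⊆ Y') (hZ : Z ⊆ Z') :
    G.ASP X Y Z ⊆ G.ASP X Y' Z' := by
  rintro s ⟨a, ha, h⟩
  refine ⟨a, ha, fun b hb hbad => ?_⟩
  obtain ⟨h1, h2⟩ := h b hb fun ⟨hb, a', ha', h'⟩ =>
    hbad ⟨hb, a', ha', h'.mono (Set.inter_subset_inter_right _ hY)⟩
  exact ⟨h1.trans hZ, h2⟩

/-- The operator `Y ↦ νZ.ASP(S,Y,Z)`. -/
def stepY (Y : Set G.S) : Set G.S := gfpS fun Z => G.ASP Set.univ Y Z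

lemma stepY_mono : Monotone G.stepY := fun _ _ h =>
  gfpS_mono fun Z => G.ASP_mono _ h (subset_refl Z)

/-- The `n`-th approximation `Yₙ` of the least fixpoint `Y*`, starting from `Y₀ = ∅`. -/
def stage (n : ℕ) : Set G.S := G.stepY^[n] ∅

lemma stage_succ (n : ℕ) : G.stage (n + 1) = G.stepY (G.stage n) :=
  Function.iterate_succ_apply' _ _ _

lemma stage_mono : Monotone G.stage :=
  G.stepY_mono.monotone_iterate_of_le_map (Set.empty_subset _)

lemma Ystar_subset {s : G.S} (hs : s ∈ G.Ystar) : ∃ n, s ∈ G.stage n := by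
  obtain ⟨n, hn⟩ := WellFoundedGT.monotone_chain_condition ⟨G.stage, G.stage_mono⟩
  refine ⟨n, hs _ ?_⟩
  change G.stepY (G.stage n) ⊆ G.stage n
  rw [← stage_succ]
  exact (hn (n + 1) (Nat.le_succ n)).symm.subset

lemma stage_succ_subset (n : ℕ) :
    G.stage (n + 1) ⊆ G.ASP Set.univ (G.stage n) (G.stage (n + 1)) := by
  rw [stage_succ]
  exact gfpS_subset (f := fun Z => G.ASP Set.univ (G.stage n) Z)
    fun _ _ h => G.ASP_mono _ (subset_refl _) h

/-- A single selector of actions that is good at every state of `Y*`, for the stage at which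
that state enters the iteration. -/
lemma exists_selector : ∃ g : G.S → G.A, (∀ s, g s ∈ G.moves1 s) ∧
    ∀ s n, s ∈ G.stage (n + 1) → s ∉ G.stage n →
      g s ∈ G.good1 s Set.univ (G.stage n) (G.stage (n + 1)) := by
  have : ∀ s, ∃ a, a ∈ G.moves1 s ∧ ∀ n, s ∈ G.stage (n + 1) → s ∉ G.stage n →
      a ∈ G.good1 s Set.univ (G.stage n) (G.stage (n + 1)) := by
    intro s
    by_cases h : ∃ n, s ∈ G.stage (n + 1) ∧ s ∉ G.stage n
    · obtain ⟨n, h1, h2⟩ := h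
      obtain ⟨a, ha⟩ := G.stage_succ_subset n h1
      refine ⟨a, ha.1.1, fun m h3 h4 => ?_⟩
      have : m = n := by
        by_contra hne
        rcases lt_or_gt_of_ne hne with hlt | hlt
        · exact h2 (G.stage_mono (Nat.succ_le_of_lt hlt) h3)
        · exact h4 (G.stage_mono (Nat.succ_le_of_lt hlt) h1)
      rwa [this]
    · obtain ⟨a, ha⟩ := G.moves1_nonempty s
      exact ⟨a, ha, fun n h1 h2 => (h ⟨n, h1, h2⟩).elim⟩
  choose g hg using this
  exact ⟨g, fun s => (hg s).1, fun s => (hg s).2⟩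

end Stages

/-! ### The Markov strategy -/

section Strat

variable {G : CGS}

/-- Mixture `p • μ + (1 - p) • ν` of two probability mass functions. -/
noncomputable def mix {α : Type*} [Fintype α] (p : NNReal) (hp : p ≤ 1) (μ ν : PMF α) : PMF α :=
  PMF.ofFintype (fun a => p * μ a + (1 - p) * ν a) (by
    rw [Finset.sum_add_distrib, ← Finset.mul_sum, ← Finset.mul_sum, PMF_sum_eq_one,
      PMF_sum_eq_one, mul_one, mul_one]
    exact add_tsub_cancel_of_le (by exact_mod_cast hp))

/-- The decreasing sequence `uₙ = (n+2)/(n+1)`, bounded below by `1`. -/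
noncomputable def wt (n : ℕ) : NNReal := (n + 2) / (n + 1)

lemma one_le_wt (n : ℕ) : 1 ≤ wt n := by
  unfold wt
  rw [one_le_div (by positivity)]
  gcongr
  norm_num

lemma wt_succ_lt (n : ℕ) : wt (n + 1) < wt n := by
  unfold wt
  rw [div_lt_div_iff₀ (by positivity) (by positivity), ← NNReal.coe_lt_coe]
  push_cast
  nlinarith

lemma wt_pos (n : ℕ) : 0 < wt n := lt_of_lt_of_le one_pos (one_le_wt n)

/-- The probability `uₙ₊₁ / uₙ < 1` with which the selected action is played in round `n`.
The product of these numbers over all `n` telescopes and is positive. -/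
noncomputable def goodProb (n : ℕ) : NNReal := wt (n + 1) / wt n

lemma goodProb_lt_one (n : ℕ) : goodProb n < 1 :=
  (div_lt_one (wt_pos n)).2 (wt_succ_lt n)

/-- In round `n`, play the action selected by `g` with probability `goodProb n`, and otherwise
an action chosen uniformly among all available ones. -/
noncomputable def mixStrategy (g : G.S → G.A) (hg : ∀ s, g s ∈ G.moves1 s) : G.Strategy1 where
  play h s := mix (goodProb h.length) (goodProb_lt_one _).le (PMF.pure (g s))
    (PMF.uniformOfFinset (G.moves1 s) (G.moves1_nonempty s))
  play_mem h s a ha := by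
    by_contra hna
    apply ha
    have : a ≠ g s := fun h => hna (h ▸ hg s)
    simp [mix, this, hna]

lemma goodProb_le_play (g : G.S → G.A) (hg : ∀ s, g s ∈ G.moves1 s) (h : G.Hist) (s : G.S) :
    (goodProb h.length : ℝ≥0∞) ≤ (mixStrategy g hg).play h s (g s) := by
  simp [mixStrategy, mix]

lemma play_ne_zero (g : G.S → G.A) (hg : ∀ s, g s ∈ G.moves1 s) (h : G.Hist) (s : G.S)
    (a : G.A) (ha : a ∈ G.moves1 s) : (mixStrategy g hg).play h s a ≠ 0 := by
  have h1 : (1 : ℝ≥0∞) - goodProb h.length ≠ 0 :=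
    (tsub_pos_of_lt (by exact_mod_cast goodProb_lt_one _)).ne'
  have h2 : PMF.uniformOfFinset (G.moves1 s) (G.moves1_nonempty s) a ≠ 0 := by
    rw [← PMF.mem_support_iff]; simpa using ha
  simp only [mixStrategy, mix, PMF.ofFintype_apply]
  exact fun h => mul_ne_zero h1 h2 (add_eq_zero.1 h).2

end Strat

/-! ### Positive probability of following the selector forever -/

section Main

variable {G : CGS}

lemma exists_play2 (σ2 : G.Strategy2) (h : G.Hist) (s : G.S) : ∃ b, σ2.play h s b ≠ 0 := by
  obtain ⟨b, hb⟩ := (σ2.play h s).support_nonempty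
  exact ⟨b, hb⟩

lemma le_limInfAvg (ρ : G.Play) (N : ℕ)
    (h : ∀ i, N ≤ i → G.reward (ρ i).1 (ρ i).2.1 (ρ i).2.2 = 1) : ρ ∈ G.evLimInfAvgGe 1 := by
  have h1 : Tendsto (fun i => G.reward (ρ i).1 (ρ i).2.1 (ρ i).2.2) atTop (nhds 1) :=
    tendsto_const_nhds.congr' (eventually_atTop.2 ⟨N, fun i hi => (h i hi).symm⟩)
  have h2 : Tendsto (G.avg ρ) atTop (nhds 1) :=
    h1.cesaro.congr fun n => by rw [avg, div_eq_inv_mul]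
  exact h2.liminf_eq.ge

/-- The plays whose first `n` rounds have positive probability, agree with `ρ0` up to round
`n0`, and follow the selector `g` from round `n0` on. -/
def follow (σ1 : G.Strategy1) (σ2 : G.Strategy2) (s : G.S) (g : G.S → G.A) (ρ0 : G.Play)
    (n0 n : ℕ) : Set G.Play :=
  {ρ | prefProb σ1 σ2 [] s (pre ρ n) ≠ 0 ∧ (∀ i < n, i < n0 → ρ i = ρ0 i) ∧
    ∀ i < n, n0 ≤ i → (ρ i).2.1 = g (ρ i).1}

lemma follow_antitone (σ1 : G.Strategy1) (σ2 : G.Strategy2) (s : G.S) (g : G.S → G.A)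
    (ρ0 : G.Play) (n0 : ℕ) : Antitone (follow σ1 σ2 s g ρ0 n0) := by
  refine antitone_nat_of_succ_le fun n ρ ⟨h1, h2, h3⟩ => ⟨?_, ?_, ?_⟩
  · rw [pre_succ, prefProb_append] at h1
    exact left_ne_zero_of_mul h1
  · exact fun i hi => h2 i (hi.trans (Nat.lt_succ_self n))
  · exact fun i hi => h3 i (hi.trans (Nat.lt_succ_self n))

lemma follow_determined (σ1 : G.Strategy1) (σ2 : G.Strategy2) (s : G.S) (g : G.S → G.A)
    (ρ0 : G.Play) (n0 n : ℕ) (ρ ρ' : G.Play) (h : ∀ i < n, ρ i = ρ' i)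
    (hρ : ρ ∈ follow σ1 σ2 s g ρ0 n0 n) : ρ' ∈ follow σ1 σ2 s g ρ0 n0 n := by
  obtain ⟨h1, h2, h3⟩ := hρ
  refine ⟨by rwa [← pre_congr h], fun i hi => ?_, fun i hi => ?_⟩
  · rw [← h i hi]; exact h2 i hi
  · rw [← h i hi]; exact h3 i hi

/-- Passing from length `n` to length `n + 1` loses at most the factor `goodProb n`. -/
lemma approx_follow_succ (σ2 : G.Strategy2) (s : G.S) (g : G.S → G.A)
    (hg : ∀ s, g s ∈ G.moves1 s) (ρ0 : G.Play) (n0 n : ℕ) (hn : n0 ≤ n) :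
    approx (mixStrategy g hg) σ2 s n (follow (mixStrategy g hg) σ2 s g ρ0 n0 n) * goodProb n ≤
      approx (mixStrategy g hg) σ2 s (n + 1)
        (follow (mixStrategy g hg) σ2 s g ρ0 n0 (n + 1)) := by
  unfold approx
  rw [sum_word_succ, Finset.sum_mul]
  refine Finset.sum_le_sum fun w _ => ?_
  split_ifs with hw
  swap
  · simp
  obtain ⟨ρ, hρw, hρ⟩ := hw
  have hpre : pre ρ n = List.ofFn w := by
    unfold pre; congr 1; funext i; exact hρw i
  have hp := le_sum_roundProb (mixStrategy g hg) σ2 s (List.ofFn w) g (goodProb n) fun t => by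
    simpa using goodProb_le_play g hg (List.ofFn w) t
  refine (mul_le_mul_right hp _).trans ?_
  rw [Finset.mul_sum]
  refine Finset.sum_le_sum fun m _ => ?_
  rw [prefProb_snoc]
  split_ifs with h1 h2 h2
  · exact le_rfl
  · -- a prolongation following `g` that is not counted must have probability zero
    rw [nonpos_iff_eq_zero]
    by_contra hne
    let ρ' : G.Play := Function.update ρ n m
    have hlt : ∀ i < n, ρ' i = ρ i := fun i hi => Function.update_of_ne hi.ne _ _
    have hat : ρ' n = m := Function.update_self _ _ _
    refine h2 ⟨ρ', ?_, ?_, ?_, ?_⟩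
    · intro i
      refine Fin.lastCases ?_ (fun j => ?_) i
      · simpa using hat
      · simpa using (hlt j j.2).trans (hρw j)
    · rw [pre_succ, prefProb_append, pre_congr hlt, hat, hpre]
      exact hne
    · intro i hi hi0
      have : i < n := hi0.trans_le hn
      rw [hlt i this]
      exact hρ.2.1 i this hi0
    · intro i hi hi0
      rcases Nat.lt_succ_iff_lt_or_eq.1 hi with h | rfl
      · rw [hlt i h]; exact hρ.2.2 i h hi0
      · rw [hat]; exact h1
  · simp
  · simp

lemma approx_follow_lower (σ2 : G.Strategy2) (s : G.S) (g : G.S → G.A)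
    (hg : ∀ s, g s ∈ G.moves1 s) (ρ0 : G.Play) (n0 n : ℕ) (hn : n0 ≤ n)
    (hpos : prefProb (mixStrategy g hg) σ2 [] s (pre ρ0 n0) ≠ 0) :
    prefProb (mixStrategy g hg) σ2 [] s (pre ρ0 n0) / wt n0 * wt n ≤
      approx (mixStrategy g hg) σ2 s n (follow (mixStrategy g hg) σ2 s g ρ0 n0 n) := by
  induction n, hn using Nat.le_induction with
  | base =>
    rw [ENNReal.div_mul_cancel (by exact_mod_cast (wt_pos n0).ne') ENNReal.coe_ne_top]
    unfold approx
    refine le_trans ?_ (Finset.single_le_sum (fun _ _ => zero_le)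
      (Finset.mem_univ fun i : Fin n0 => ρ0 i))
    rw [if_pos ⟨ρ0, fun _ => rfl, hpos, fun _ _ _ => rfl, fun i h1 h2 => absurd h1 h2.not_gt⟩]
    rfl
  | succ n hn ih =>
    refine le_trans ?_ (approx_follow_succ σ2 s g hg ρ0 n0 n hn)
    refine le_trans (le_of_eq ?_) (mul_le_mul_left ih _)
    rw [mul_assoc, ← ENNReal.coe_mul, goodProb, mul_div_cancel₀ _ (wt_pos n).ne']

end Main

end CGS

/-- Lemma 9 of the paper. There is a Markov strategy for player 1
which ensures `LimInfAvg(1)` with positive probability from every state of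
`Y* = μY.νZ.ASP(S,Y,Z)` against every strategy of player 2. -/
theorem stmt12 (G : CGS) :
    ∃ σ1 : G.Strategy1, σ1.Markov ∧
      ∀ s ∈ G.Ystar, ∀ σ2 : G.Strategy2,
        0 < CGS.pr σ1 σ2 s (G.evLimInfAvgGe 1) := by
  obtain ⟨g, hg, hgood⟩ := G.exists_selector
  refine ⟨CGS.mixStrategy g hg, fun h h' s hl => by simp only [CGS.mixStrategy, hl], ?_⟩
  intro s hs σ2
  set σ1 := CGS.mixStrategy g hg with hσ1
  -- stages containing the last state of a positive-probability history whose last round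
  -- follows the selector
  let R : ℕ → Prop := fun n => ∃ w t b,
    CGS.prefProb σ1 σ2 [] s (w ++ [(t, g t, b)]) ≠ 0 ∧ t ∈ G.stage n
  have hR : ∃ n, R n := by
    obtain ⟨n, hn⟩ := G.Ystar_subset hs
    obtain ⟨b, hb⟩ := CGS.exists_play2 σ2 [] s
    refine ⟨n, [], s, b, ?_, hn⟩
    rw [CGS.prefProb_append]
    refine mul_ne_zero (by simp [CGS.prefProb]) (mul_ne_zero ?_ (mul_ne_zero ?_ hb))
    · simp [CGS.nextState_nil]
    · exact CGS.play_ne_zero g hg _ _ _ (hg s)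
  obtain ⟨n, hRn, hmin⟩ : ∃ n, R n ∧ ∀ m < n, ¬ R m :=
    ⟨Nat.find hR, Nat.find_spec hR, fun m => Nat.find_min hR⟩
  rcases n with _ | k
  · obtain ⟨w, t, b, -, ht⟩ := hRn
    exact ht.elim
  have hk : ¬ R k := hmin k (Nat.lt_succ_self k)
  -- by minimality of the stage, player 2 cannot have played a bad action
  have key : ∀ w t b, CGS.prefProb σ1 σ2 [] s (w ++ [(t, g t, b)]) ≠ 0 →
      t ∈ G.stage (k + 1) →
      (G.trans t (g t) b).support ⊆ G.stage (k + 1) ∧ G.reward t (g t) b = 1 := by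
    intro w t b hw ht
    have htk : t ∉ G.stage k := fun h => hk ⟨w, t, b, hw, h⟩
    have hw' := hw
    rw [CGS.prefProb_append] at hw'
    have hw1 := left_ne_zero_of_mul hw'
    have hnx := left_ne_zero_of_mul (right_ne_zero_of_mul hw')
    have hb := right_ne_zero_of_mul (right_ne_zero_of_mul (right_ne_zero_of_mul hw'))
    refine (hgood t k ht htk).2 b (σ2.play_mem _ _ _ hb) ?_
    rintro ⟨-, a, ha, t', ht', ht'k⟩
    obtain ⟨b', hb'⟩ := CGS.exists_play2 σ2 (w ++ [(t, a, b)]) t'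
    refine hk ⟨w ++ [(t, a, b)], t', b', ?_, ht'k⟩
    rw [CGS.prefProb_append, CGS.prefProb_append]
    refine mul_ne_zero (mul_ne_zero hw1 (mul_ne_zero hnx (mul_ne_zero
      (CGS.play_ne_zero g hg _ _ _ ha.1) hb))) (mul_ne_zero ?_ (mul_ne_zero
        (CGS.play_ne_zero g hg _ _ _ (hg t')) hb'))
    rw [CGS.nextState_append]
    exact ht'
  obtain ⟨w, t, b, hw, ht⟩ := hRn
  have : Inhabited G.Move := ⟨(t, g t, b)⟩
  obtain ⟨ρ0, hρ0⟩ := CGS.exists_pre_eq (w ++ [(t, g t, b)])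
  rw [List.length_append, List.length_singleton] at hρ0
  have hlast : ρ0 w.length = (t, g t, b) := by
    rw [CGS.pre_succ] at hρ0
    simpa using (List.append_inj' hρ0 rfl).2
  have hpos : CGS.prefProb σ1 σ2 [] s (CGS.pre ρ0 (w.length + 1)) ≠ 0 := by rwa [hρ0]
  refine lt_of_lt_of_le (b := CGS.prefProb σ1 σ2 [] s (CGS.pre ρ0 (w.length + 1)) /
    CGS.wt (w.length + 1)) (ENNReal.div_pos hpos ENNReal.coe_ne_top) ?_
  refine CGS.le_pr σ1 σ2 s _ (CGS.follow σ1 σ2 s g ρ0 (w.length + 1))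
    (CGS.follow_antitone _ _ _ _ _ _) (CGS.follow_determined _ _ _ _ _ _) ?_ _
    (w.length + 1) fun n hn => ?_
  · intro ρ hρ
    rw [Set.mem_iInter] at hρ
    have hg' : ∀ i, w.length ≤ i → (ρ i).2.1 = g (ρ i).1 := by
      intro i hi
      rcases hi.eq_or_lt with rfl | hlt
      · rw [(hρ (w.length + 1)).2.1 _ (Nat.lt_succ_self _) (Nat.lt_succ_self _), hlast]
      · exact (hρ (i + 1)).2.2 i (Nat.lt_succ_self i) hlt
    have hpos' : ∀ i, w.length ≤ i →
        CGS.prefProb σ1 σ2 [] s (CGS.pre ρ i ++ [((ρ i).1, g (ρ i).1, (ρ i).2.2)]) ≠ 0 := by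
      intro i hi
      rw [← hg' i hi]
      have := (hρ (i + 1)).1
      rwa [CGS.pre_succ] at this
    have hst : ∀ i, w.length ≤ i → (ρ i).1 ∈ G.stage (k + 1) := by
      intro i hi
      induction i, hi using Nat.le_induction with
      | base =>
        rwa [(hρ (w.length + 1)).2.1 _ (Nat.lt_succ_self _) (Nat.lt_succ_self _), hlast]
      | succ i hi ih =>
        refine (key _ _ _ (hpos' i hi) ih).1 ?_
        have := (hρ (i + 2)).1
        rw [CGS.pre_succ, CGS.prefProb_append, CGS.pre_succ] at this
        have := left_ne_zero_of_mul (right_ne_zero_of_mul this)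
        rw [CGS.nextState_append, hg' i hi] at this
        exact this
    refine CGS.le_limInfAvg ρ w.length fun i hi => ?_
    rw [hg' i hi]
    exact (key _ _ _ (hpos' i hi) (hst i hi)).2
  · refine le_trans ?_ (CGS.approx_follow_lower σ2 s g hg ρ0 (w.length + 1) n hn hpos)
    refine le_mul_of_one_le_right zero_le ?_
    exact_mod_cast CGS.one_le_wt n
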